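/- The right-invariant partial order on PPU(b) defined by φ ≤ ψ :⟺ ψφ⁻¹ ∈ PPU(b)⁺ is a lattice order: any two elements of PPU(b) have a least upper bound and a greatest lower bound with respect to this order. -/

import Mathlib

open Finsupp

variable (k : Type*) [Field k] (V : Type*) [AddCommGroup V] [Module k V]

/-- Multiplication by `t^n` on `V[t,t⁻¹] := ℤ →₀ V` (writing `v = ∑ᵢ tⁱ vᵢ` as the
finitely supported function `i ↦ vᵢ`). -/
noncomputable def shift (n : ℤ) : (ℤ →₀ V) ≃ₗ[k] (ℤ →₀ V) :=
  Finsupp.domLCongr (Equiv.addRight n)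

/-- The coefficient of `tⁿ` of `b̃(v,w) = ∑ₙ tⁿ (∑ᵢ b(v_{i-n}, w_i))`. -/
noncomputable def Btilde (b : LinearMap.BilinForm k V) (n : ℤ) (v w : ℤ →₀ V) : k :=
  w.sum fun i wi => b (v (i - n)) wi

/-- `φ` is a paraunitary transformation: an invertible `k[t,t⁻¹]`-linear
(i.e. `k`-linear and commuting with multiplication by `t`) endomorphism of
`V[t,t⁻¹]` preserving `b̃`. -/
def IsPU (b : LinearMap.BilinForm k V) (φ : (ℤ →₀ V) ≃ₗ[k] (ℤ →₀ V)) : Prop :=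
  (∀ v, φ (shift k V 1 v) = shift k V 1 (φ v)) ∧
  ∀ (n : ℤ) (v w : ℤ →₀ V), Btilde k V b n (φ v) (φ w) = Btilde k V b n v w

/-- The specialization `t = 1` of a `k[t,t⁻¹]`-linear endomorphism `f = ∑ᵢ tⁱ fᵢ`
of `V[t,t⁻¹]`, i.e. the endomorphism `ε₁(f) = ∑ᵢ fᵢ` of `V`. -/
noncomputable def eps (f : (ℤ →₀ V) →ₗ[k] (ℤ →₀ V)) : V →ₗ[k] V :=
  (Finsupp.lsum k fun _ : ℤ => (LinearMap.id : V →ₗ[k] V)) ∘ₗ f ∘ₗ Finsupp.lsingle 0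

/-- `φ` is pure paraunitary: paraunitary and specializing to the identity at `t = 1`. -/
def IsPPU (b : LinearMap.BilinForm k V) (φ : (ℤ →₀ V) ≃ₗ[k] (ℤ →₀ V)) : Prop :=
  IsPU k V b φ ∧ eps k V (φ : (ℤ →₀ V) →ₗ[k] (ℤ →₀ V)) = LinearMap.id

/-- `φ ∈ PPU(b)⁻`: pure paraunitary and all Laurent coefficients `φᵢ` for `i > 0` vanish. -/
def PPUneg (b : LinearMap.BilinForm k V) (φ : (ℤ →₀ V) ≃ₗ[k] (ℤ →₀ V)) : Prop :=
  IsPPU k V b φ ∧ ∀ (x : V) (i : ℤ), 0 < i → φ (Finsupp.single 0 x) i = 0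

/-- `φ ∈ PPU(b)⁺`: pure paraunitary and all Laurent coefficients `φᵢ` for `i < 0` vanish. -/
def PPUpos (b : LinearMap.BilinForm k V) (φ : (ℤ →₀ V) ≃ₗ[k] (ℤ →₀ V)) : Prop :=
  IsPPU k V b φ ∧ ∀ (x : V) (i : ℤ), i < 0 → φ (Finsupp.single 0 x) i = 0

/-!
Sending `φ` to `φ⁻¹(V[t])` turns the order on `PPU(b)` into inclusion of `k[t]`-submodules of
`V[t,t⁻¹]` commensurable with `V[t]`. These are closed under sums and intersections, so it suffices
that each such `M` arises from some `φ`. For this, let `W` be the orthogonal complement of `tM` in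
`M` with respect to the constant coefficient of `b̃`. As in the Wold decomposition, `M = ⨁ₙ tⁿW`,
and `b̃` takes constant values on `W`, so evaluation at `t = 1` is an isometry `W ≅ V`. The
`k[t,t⁻¹]`-linear extension of its inverse is pure paraunitary and maps `V[t]` onto `M`.

The complements exist because `b̃` is again anisotropic: if `v` is isotropic then so is `v(1)`,
which is therefore zero, so `v` is divisible by `t - 1` and the quotient is a shorter isotropic
vector.
-/

section Orthogonal

variable {K E : Type*} [Field K] [AddCommGroup E] [Module K E] {B : LinearMap.BilinForm K E}

theorem codisjoint_orthogonal_of_disjoint {F : Submodule K E} [FiniteDimensional K F]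
    (hB : B.IsRefl) (hF : Disjoint F (B.orthogonal F)) : Codisjoint F (B.orthogonal F) := by
  have hnondeg := B.nondegenerate_restrict_of_disjoint_orthogonal hB hF
  refine codisjoint_iff.2 (Submodule.eq_top_iff'.2 fun x => Submodule.mem_sup.2 ?_)
  set f : F := ((B.restrict F).toDual hnondeg).symm ((B x).domRestrict F)
  refine ⟨f, f.2, x - f, fun y hy => hB _ _ ?_, by simp⟩
  have hf : B f y = B x y :=
    (B.restrict F).apply_toDual_symm_apply (f := (B x).domRestrict F) (v := ⟨y, hy⟩)
  simp [hf]

theorem codisjoint_orthogonal_of_finiteDimensional_inf {N P : Submodule K E}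
    [FiniteDimensional K ↥(N ⊓ B.orthogonal P)] (hB : B.IsRefl) (hPN : P ≤ N)
    (hP : Codisjoint P (B.orthogonal P)) (hN : Disjoint N (B.orthogonal N)) :
    Codisjoint N (B.orthogonal N) := by
  set F := N ⊓ B.orthogonal P
  have hNFP : N = F ⊔ P := by
    rw [inf_sup_assoc_of_le _ hPN, sup_comm, hP.eq_top, inf_top_eq]
  have horth : B.orthogonal F ⊓ B.orthogonal P ≤ B.orthogonal N := by
    rw [hNFP]
    rintro x ⟨hxF, hxP⟩ y hy
    obtain ⟨f, hf, p, hp, rfl⟩ := Submodule.mem_sup.1 hy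
    change B (f + p) x = 0
    rw [map_add, LinearMap.add_apply, hxF f hf, hxP p hp, add_zero]
  have hF : Disjoint F (B.orthogonal F) := Submodule.disjoint_def.2 fun x hx hxF =>
    Submodule.disjoint_def.1 hN x hx.1 (horth ⟨hxF, hx.2⟩)
  have hPF : P ≤ B.orthogonal F := fun p hp f hf => hB _ _ (hf.2 p hp)
  refine codisjoint_iff.2 (top_le_iff.1 ?_)
  calc ⊤ = F ⊔ (B.orthogonal F ⊓ (P ⊔ B.orthogonal P)) := by
        rw [hP.eq_top, inf_top_eq, (codisjoint_orthogonal_of_disjoint hB hF).eq_top]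
    _ = F ⊔ P ⊔ (B.orthogonal F ⊓ B.orthogonal P) := by
        rw [inf_comm, sup_inf_assoc_of_le _ hPF, inf_comm, sup_assoc]
    _ ≤ N ⊔ B.orthogonal N := sup_le_sup hNFP.ge horth

end Orthogonal

section LaurentModule

variable {k V}

@[simp]
theorem shift_apply (n : ℤ) (v : ℤ →₀ V) (i : ℤ) : shift k V n v i = v (i - n) := by
  simp [shift, domLCongr_apply, sub_eq_add_neg]

@[simp]
theorem shift_zero (v : ℤ →₀ V) : shift k V 0 v = v := by
  ext i
  simp

@[simp]
theorem shift_shift (m n : ℤ) (v : ℤ →₀ V) :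
    shift k V m (shift k V n v) = shift k V (m + n) v := by
  ext i
  simp [sub_sub]

@[simp]
theorem shift_single (n i : ℤ) (x : V) : shift k V n (single i x) = single (i + n) x :=
  domLCongr_single _ i x

theorem eq_zero_of_shift_one_eq {v : ℤ →₀ V} (h : shift k V 1 v = v) : v = 0 := by
  have hperiodic : Function.Periodic v 1 := fun i => by
    conv_lhs => rw [← h, shift_apply, add_sub_cancel_right]
  obtain ⟨j, hj⟩ := Infinite.exists_notMem_finset v.support
  ext i
  calc v i = v 0 := by simpa using hperiodic.int_mul_eq i
    _ = v j := by simpa using (hperiodic.int_mul_eq j).symm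
    _ = 0 := notMem_support_iff.1 hj

theorem supported_le_of_single_mem {s : Set ℤ} {M : Submodule k (ℤ →₀ V)}
    (h : ∀ i ∈ s, ∀ x, single i x ∈ M) : supported V k s ≤ M := fun v hv => by
  rw [← v.sum_single]
  exact M.sum_mem fun i hi => h i (hv hi) (v i)

variable (k V) in
/-- The specialization `V[t,t⁻¹] → V` at `t = 1`, so that `ε₁(φ)(x)` is `evalOne (φ x)`. -/
noncomputable def evalOne : (ℤ →₀ V) →ₗ[k] V :=
  lsum k fun _ => LinearMap.id

@[simp]
theorem evalOne_single (i : ℤ) (x : V) : evalOne k V (single i x) = x := by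
  simp [evalOne]

@[simp]
theorem evalOne_shift (n : ℤ) (v : ℤ →₀ V) :
    evalOne k V (shift k V n v) = evalOne k V v := by
  induction v using Finsupp.induction_linear <;> simp_all

theorem sub_single_evalOne_mem_map {a c : ℤ} {v : ℤ →₀ V} (hv : v ∈ supported V k (Set.Icc a c)) :
    v - single a (evalOne k V v) ∈
      (supported V k (Set.Ico a c)).map ((shift k V 1).toLinearMap - LinearMap.id) := by
  set N := (supported V k (Set.Ico a c)).map ((shift k V 1).toLinearMap - LinearMap.id)
  suffices h : supported V k (Set.Icc a c) ≤
      N.comap (LinearMap.id - lsingle a ∘ₗ evalOne k V) from h hv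
  refine supported_le_of_single_mem fun i hi x => ?_
  suffices h : i ≤ c → single i x - single a x ∈ N by simpa using h hi.2
  induction i, hi.1 using Int.leInduction with
  | base => simp
  | succ i hai ih =>
    intro hic
    have hstep : single (i + 1) x - single i x ∈ N :=
      ⟨single i x, single_mem_supported k x ⟨hai, by lia⟩, by simp⟩
    simpa using N.add_mem hstep (ih ⟨hai, by lia⟩ (by lia))

end LaurentModule

section LaurentForm

variable {k V}

/-- The form `b̃`, with values in `k[t,t⁻¹]` encoded as `ℤ →₀ k`. It is bundled as a `k`-bilinear
map: over `k[t,t⁻¹]` it is linear in the second variable, but semilinear for `t ↦ t⁻¹` in the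
first. -/
noncomputable def laurentForm (b : LinearMap.BilinForm k V) :
    (ℤ →₀ V) →ₗ[k] (ℤ →₀ V) →ₗ[k] (ℤ →₀ k) :=
  lsum k fun i => (lsum k fun j => (b.compr₂ (lsingle (j - i))).flip).flip

variable (b : LinearMap.BilinForm k V)

@[simp]
theorem laurentForm_single_single (i j : ℤ) (x y : V) :
    laurentForm b (single i x) (single j y) = single (j - i) (b x y) := by
  simp [laurentForm]

theorem laurentForm_single_left_apply (i : ℤ) (x : V) (w : ℤ →₀ V) (n : ℤ) :
    laurentForm b (single i x) w n = b x (w (i + n)) := by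
  induction w using Finsupp.induction_linear with
  | zero => simp
  | add w w' hw hw' => simp [hw, hw']
  | single j y =>
    simp [single_apply, apply_ite (b x), sub_eq_iff_eq_add']

theorem laurentForm_single_right_apply (v : ℤ →₀ V) (j : ℤ) (y : V) (n : ℤ) :
    laurentForm b v (single j y) n = b (v (j - n)) y := by
  induction v using Finsupp.induction_linear with
  | zero => simp
  | add v v' hv hv' => simp [hv, hv']
  | single i x =>
    rcases eq_or_ne i (j - n) with rfl | h
    · simp
    · rw [laurentForm_single_single, single_eq_of_ne (by lia), single_eq_of_ne h.symm]
      simp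

theorem laurentForm_apply (v w : ℤ →₀ V) (n : ℤ) : laurentForm b v w n = Btilde k V b n v w := by
  conv_lhs => rw [← w.sum_single, map_finsuppSum, Finsupp.sum_apply]
  exact Finsupp.sum_congr fun j _ => laurentForm_single_right_apply b v j (w j) n

@[simp]
theorem laurentForm_shift_left (n : ℤ) (v w : ℤ →₀ V) :
    laurentForm b (shift k V n v) w = shift k k (-n) (laurentForm b v w) := by
  ext i
  simp [laurentForm_apply, Btilde, sub_sub]

@[simp]
theorem laurentForm_shift_right (n : ℤ) (v w : ℤ →₀ V) :
    laurentForm b v (shift k V n w) = shift k k n (laurentForm b v w) := by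
  induction w using Finsupp.induction_linear with
  | zero => simp
  | add w w' hw hw' => simp [hw, hw']
  | single j y =>
    ext i
    simp [laurentForm_single_right_apply, sub_sub_eq_add_sub]

@[simp]
theorem evalOne_laurentForm (v w : ℤ →₀ V) :
    evalOne k k (laurentForm b v w) = b (evalOne k V v) (evalOne k V w) := by
  suffices h : (laurentForm b).compr₂ (evalOne k k) = b.compl₁₂ (evalOne k V) (evalOne k V) from
    LinearMap.congr_fun₂ h v w
  ext
  simp

variable {b}

theorem laurentForm_swap_apply (hb : b.IsSymm) (v w : ℤ →₀ V) (n : ℤ) :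
    laurentForm b w v n = laurentForm b v w (-n) := by
  induction w using Finsupp.induction_linear with
  | zero => simp
  | add w w' hw hw' => simp [hw, hw']
  | single j y =>
    rw [laurentForm_single_left_apply, laurentForm_single_right_apply, sub_neg_eq_add, hb.eq]

theorem laurentForm_self_eq_zero_of_shift_sub {y : ℤ →₀ V}
    (h : laurentForm b (shift k V 1 y - y) (shift k V 1 y - y) = 0) : laurentForm b y y = 0 := by
  have hleft : laurentForm b (shift k V 1 y - y) y = 0 :=
    eq_zero_of_shift_one_eq <| sub_eq_zero.1 <| by
      rwa [map_sub (laurentForm b _), laurentForm_shift_right] at h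
  rw [map_sub, LinearMap.sub_apply, laurentForm_shift_left, sub_eq_zero] at hleft
  refine eq_zero_of_shift_one_eq (k := k) ?_
  conv_lhs => rw [← hleft]
  simp

theorem eq_zero_of_laurentForm_self_eq_zero_of_mem_supported
    (haniso : ∀ x, b x x = 0 → x = 0) {a : ℤ} {m : ℕ} {v : ℤ →₀ V}
    (hv : v ∈ supported V k (Set.Ico a (a + m))) (h : laurentForm b v v = 0) : v = 0 := by
  induction m generalizing v with
  | zero => simpa using hv
  | succ m ih =>
    have hev : evalOne k V v = 0 := haniso _ <| by rw [← evalOne_laurentForm, h, map_zero]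
    have hIco : Set.Ico a (a + (m + 1 : ℕ)) = Set.Icc a (a + m) := by
      ext i
      simp only [Set.mem_Ico, Set.mem_Icc]
      lia
    obtain ⟨y, hy, hyv⟩ := sub_single_evalOne_mem_map (hIco ▸ hv)
    obtain rfl : shift k V 1 y - y = v := by simpa [hev] using hyv
    simp [ih hy (laurentForm_self_eq_zero_of_shift_sub h)]

theorem eq_zero_of_laurentForm_self_eq_zero (haniso : ∀ x, b x x = 0 → x = 0) {v : ℤ →₀ V}
    (h : laurentForm b v v = 0) : v = 0 := by
  obtain ⟨a, ha⟩ := v.support.bddBelow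
  obtain ⟨c, hc⟩ := v.support.bddAbove
  refine eq_zero_of_laurentForm_self_eq_zero_of_mem_supported haniso (a := a)
    (m := (c + 1 - a).toNat) (fun i hi => ⟨ha hi, ?_⟩) h
  have := hc hi
  lia

variable (b) in
/-- The constant coefficient of `b̃`, a `k`-valued form for which multiplication by `t` is an
isometry. -/
noncomputable def constForm : LinearMap.BilinForm k (ℤ →₀ V) :=
  (laurentForm b).compr₂ (lapply 0)

theorem laurentForm_apply_eq_constForm (v w : ℤ →₀ V) (n : ℤ) :
    laurentForm b v w n = constForm b (shift k V n v) w := by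
  simp [constForm]

@[simp]
theorem constForm_shift_shift (n : ℤ) (v w : ℤ →₀ V) :
    constForm b (shift k V n v) (shift k V n w) = constForm b v w := by
  simp [constForm]

theorem constForm_isSymm (hb : b.IsSymm) : (constForm b).IsSymm :=
  ⟨fun v w => by simpa [constForm] using laurentForm_swap_apply hb w v 0⟩

theorem constForm_eq_zero_of_disjoint {s t : Set ℤ} (hst : Disjoint s t) {v w : ℤ →₀ V}
    (hv : v ∈ supported V k s) (hw : w ∈ supported V k t) : constForm b v w = 0 := by
  change laurentForm b v w 0 = 0
  rw [laurentForm_apply]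
  refine Finset.sum_eq_zero fun i hi => ?_
  beta_reduce
  rw [sub_zero, (mem_supported' k v).1 hv i (hst.notMem_of_mem_right (hw hi)), map_zero,
    LinearMap.zero_apply]

end LaurentForm

section Lattice

variable {k V}

variable (k V) in
/-- The `k[t]`-lattice `tⁿV[t]` in `V[t,t⁻¹]`. -/
noncomputable def stdLattice (n : ℤ) : Submodule k (ℤ →₀ V) :=
  supported V k (Set.Ici n)

theorem mem_stdLattice {n : ℤ} {v : ℤ →₀ V} : v ∈ stdLattice k V n ↔ ∀ i < n, v i = 0 := by
  simp [stdLattice, mem_supported']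

theorem single_mem_stdLattice {n i : ℤ} (h : n ≤ i) (x : V) : single i x ∈ stdLattice k V n :=
  single_mem_supported k x h

theorem shift_mem_stdLattice_iff {m n : ℤ} {v : ℤ →₀ V} :
    shift k V m v ∈ stdLattice k V n ↔ v ∈ stdLattice k V (n - m) := by
  simp only [mem_stdLattice, shift_apply]
  exact ⟨fun h i hi => by simpa using h (i + m) (by lia), fun h i hi => h _ (by lia)⟩

theorem stdLattice_antitone : Antitone (stdLattice k V) := fun _ _ h =>
  supported_mono (Set.Ici_subset_Ici.2 h)

theorem exists_le_stdLattice_of_fg {S : Submodule k (ℤ →₀ V)} (hS : S.FG) :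
    ∃ n, S ≤ stdLattice k V n := by
  classical
  obtain ⟨s, rfl⟩ := hS
  obtain ⟨n, hn⟩ := (s.biUnion Finsupp.support).bddBelow
  exact ⟨n, Submodule.span_le.2 fun v hv i hi => hn (Finset.mem_biUnion.2 ⟨v, hv, hi⟩)⟩

/-- `k[t]`-submodules of `V[t,t⁻¹]` that are commensurable with `V[t]`. For finite-dimensional `V`
these are the `k[t]`-lattices of full rank. -/
structure IsLaurentLattice (M : Submodule k (ℤ →₀ V)) : Prop where
  shift_one_mem : ∀ v ∈ M, shift k V 1 v ∈ M
  exists_stdLattice_le : ∃ n, stdLattice k V n ≤ M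
  exists_le_stdLattice : ∃ n, M ≤ stdLattice k V n

namespace IsLaurentLattice

variable {M N : Submodule k (ℤ →₀ V)}

theorem inf (hM : IsLaurentLattice M) (hN : IsLaurentLattice N) : IsLaurentLattice (M ⊓ N) where
  shift_one_mem v hv := ⟨hM.shift_one_mem v hv.1, hN.shift_one_mem v hv.2⟩
  exists_stdLattice_le := by
    obtain ⟨m, hm⟩ := hM.exists_stdLattice_le
    obtain ⟨n, hn⟩ := hN.exists_stdLattice_le
    exact ⟨max m n, le_inf ((stdLattice_antitone (le_max_left m n)).trans hm)
      ((stdLattice_antitone (le_max_right m n)).trans hn)⟩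
  exists_le_stdLattice := hM.exists_le_stdLattice.imp fun _ => inf_le_of_left_le

theorem sup (hM : IsLaurentLattice M) (hN : IsLaurentLattice N) : IsLaurentLattice (M ⊔ N) where
  shift_one_mem v hv := by
    suffices h : M ⊔ N ≤ (M ⊔ N).comap (shift k V 1).toLinearMap from h hv
    exact sup_le (fun v hv => Submodule.mem_sup_left (hM.shift_one_mem v hv))
      fun v hv => Submodule.mem_sup_right (hN.shift_one_mem v hv)
  exists_stdLattice_le := hM.exists_stdLattice_le.imp fun _ => le_sup_of_le_left
  exists_le_stdLattice := by
    obtain ⟨m, hm⟩ := hM.exists_le_stdLattice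
    obtain ⟨n, hn⟩ := hN.exists_le_stdLattice
    exact ⟨min m n, sup_le (hm.trans (stdLattice_antitone (min_le_left m n)))
      (hn.trans (stdLattice_antitone (min_le_right m n)))⟩

theorem shift_mem (hM : IsLaurentLattice M) {n : ℤ} (hn : 0 ≤ n) {v : ℤ →₀ V} (hv : v ∈ M) :
    shift k V n v ∈ M := by
  induction n, hn using Int.leInduction with
  | base => simpa
  | succ n _ ih => simpa [add_comm] using hM.shift_one_mem _ ih

theorem map_shift (hM : IsLaurentLattice M) (n : ℤ) :
    IsLaurentLattice (M.map (shift k V n).toLinearMap) where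
  shift_one_mem := by
    rintro _ ⟨v, hv, rfl⟩
    exact ⟨shift k V 1 v, hM.shift_one_mem v hv, by simp [add_comm]⟩
  exists_stdLattice_le := by
    obtain ⟨m, hm⟩ := hM.exists_stdLattice_le
    refine ⟨m + n, fun v hv => ⟨shift k V (-n) v, hm ?_, by simp⟩⟩
    rwa [shift_mem_stdLattice_iff, sub_neg_eq_add]
  exists_le_stdLattice := by
    obtain ⟨m, hm⟩ := hM.exists_le_stdLattice
    refine ⟨m + n, Submodule.map_le_iff_le_comap.2 fun v hv => ?_⟩
    simpa [shift_mem_stdLattice_iff] using hm hv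

end IsLaurentLattice

end Lattice

section OrthogonalDecomposition

variable {k V} {b : LinearMap.BilinForm k V} {M : Submodule k (ℤ →₀ V)}

theorem codisjoint_stdLattice_orthogonal (n : ℤ) :
    Codisjoint (stdLattice k V n) ((constForm b).orthogonal (stdLattice k V n)) := by
  rw [codisjoint_iff, ← top_le_iff, ← supported_univ]
  refine supported_le_of_single_mem fun i _ x => ?_
  rcases le_or_gt n i with h | h
  · exact Submodule.mem_sup_left (single_mem_stdLattice h x)
  · refine Submodule.mem_sup_right fun v hv => constForm_eq_zero_of_disjoint ?_ hv
      (single_mem_supported k x (Set.mem_singleton i))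
    simpa using h

theorem orthogonal_stdLattice_le (haniso : ∀ x, b x x = 0 → x = 0) (n : ℤ) :
    (constForm b).orthogonal (stdLattice k V n) ≤ supported V k (Set.Iio n) := fun v hv =>
  (mem_supported' k v).2 fun i hi => haniso _ <| by
    have h : laurentForm b (single i (v i)) v 0 = 0 :=
      hv _ (single_mem_stdLattice (not_lt.1 hi) (v i))
    simpa [laurentForm_single_left_apply] using h

theorem IsLaurentLattice.disjoint_orthogonal (hM : IsLaurentLattice M) (hb : b.IsSymm)
    (haniso : ∀ x, b x x = 0 → x = 0) : Disjoint M ((constForm b).orthogonal M) := by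
  refine Submodule.disjoint_def.2 fun v hv hv' => eq_zero_of_laurentForm_self_eq_zero haniso ?_
  have hnonneg : ∀ n : ℤ, 0 ≤ n → laurentForm b v v n = 0 := fun n hn => by
    rw [laurentForm_apply_eq_constForm]
    exact hv' _ (hM.shift_mem hn hv)
  ext n
  rcases le_total 0 n with hn | hn
  · exact hnonneg n hn
  · rw [laurentForm_swap_apply hb]
    exact hnonneg (-n) (by lia)

theorem IsLaurentLattice.codisjoint_orthogonal [FiniteDimensional k V] (hM : IsLaurentLattice M)
    (hb : b.IsSymm) (haniso : ∀ x, b x x = 0 → x = 0) :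
    Codisjoint M ((constForm b).orthogonal M) := by
  obtain ⟨n, hn⟩ := hM.exists_stdLattice_le
  obtain ⟨m, hm⟩ := hM.exists_le_stdLattice
  have hle : M ⊓ (constForm b).orthogonal (stdLattice k V n) ≤ supported V k (Set.Ico m n) := by
    rw [← Set.Ici_inter_Iio, supported_inter]
    exact inf_le_inf hm (orthogonal_stdLattice_le haniso n)
  have : FiniteDimensional k (supported V k (Set.Ico m n)) :=
    Module.Finite.equiv (supportedEquivFinsupp (Set.Ico m n)).symm
  have := Submodule.finiteDimensional_of_le hle
  exact codisjoint_orthogonal_of_finiteDimensional_inf (constForm_isSymm hb).isRefl hn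
    (codisjoint_stdLattice_orthogonal n) (hM.disjoint_orthogonal hb haniso)

theorem exists_mem_orthogonal_map_shift (hM : IsLaurentLattice M) (hb : b.IsSymm) (v : ℤ →₀ V) :
    ∃ n : ℕ, v ∈ (constForm b).orthogonal (M.map (shift k V n).toLinearMap) := by
  obtain ⟨m, hm⟩ := hM.exists_le_stdLattice
  obtain ⟨c, hc⟩ := v.support.bddAbove
  refine ⟨(c + 1 - m).toNat, ?_⟩
  rintro _ ⟨u, hu, rfl⟩
  refine (constForm_isSymm hb).isRefl _ _ ?_
  refine constForm_eq_zero_of_disjoint (s := Set.Iic c) (t := Set.Ici (c + 1)) ?_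
    (fun i hi => hc hi) ?_
  · exact Set.disjoint_left.2 fun i (hi : i ≤ c) (hi' : c + 1 ≤ i) => by lia
  · exact shift_mem_stdLattice_iff.2 (stdLattice_antitone (by lia) (hm hu))

variable (b M) in
/-- The wandering subspace `M ⊖ tM` of a `k[t]`-lattice `M`, in the terminology of the Wold
decomposition: the orthogonal complement of `tM` in `M` for the constant coefficient of `b̃`. -/
noncomputable def wanderingSubspace : Submodule k (ℤ →₀ V) :=
  M ⊓ (constForm b).orthogonal (M.map (shift k V 1).toLinearMap)

theorem laurentForm_of_mem_wanderingSubspace (hM : IsLaurentLattice M) (hb : b.IsSymm)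
    {v w : ℤ →₀ V} (hv : v ∈ wanderingSubspace b M) (hw : w ∈ wanderingSubspace b M) :
    laurentForm b v w = single 0 (b (evalOne k V v) (evalOne k V w)) := by
  have hpos : ∀ {v w : ℤ →₀ V}, v ∈ M → w ∈ wanderingSubspace b M → ∀ n : ℤ, 0 < n →
      laurentForm b v w n = 0 := fun {v w} hv hw n hn => by
    rw [laurentForm_apply_eq_constForm]
    exact hw.2 _ ⟨shift k V (n - 1) v, hM.shift_mem (by lia) hv, by simp⟩
  have hconst : laurentForm b v w = single 0 (laurentForm b v w 0) := by
    ext n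
    rcases lt_trichotomy n 0 with hn | rfl | hn
    · rw [laurentForm_swap_apply hb, hpos hw.1 hv _ (by lia), single_eq_of_ne hn.ne]
    · simp
    · rw [hpos hv.1 hw n hn, single_eq_of_ne hn.ne']
  rw [← evalOne_laurentForm, hconst, evalOne_single, ← hconst]

theorem exists_eq_add_shift_of_mem [FiniteDimensional k V] (hM : IsLaurentLattice M)
    (hb : b.IsSymm) (haniso : ∀ x, b x x = 0 → x = 0) {v : ℤ →₀ V} (hv : v ∈ M) :
    ∃ w ∈ wanderingSubspace b M, ∃ u ∈ M, v = w + shift k V 1 u := by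
  have hcodisj := (hM.map_shift 1).codisjoint_orthogonal hb haniso
  obtain ⟨_, ⟨u, hu, rfl⟩, w, hw, rfl⟩ := Submodule.mem_sup.1 (hcodisj.eq_top.ge (x := v) trivial)
  have hwM : w ∈ M := (M.add_mem_iff_right (hM.shift_one_mem u hu)).1 hv
  exact ⟨w, ⟨hwM, hw⟩, u, hu, add_comm _ _⟩

theorem inf_orthogonal_map_shift_le_iSup [FiniteDimensional k V] (hM : IsLaurentLattice M)
    (hb : b.IsSymm) (haniso : ∀ x, b x x = 0 → x = 0) (n : ℕ) :
    M ⊓ (constForm b).orthogonal (M.map (shift k V n).toLinearMap) ≤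
      ⨆ i : ℕ, (wanderingSubspace b M).map (shift k V i).toLinearMap := by
  set S := ⨆ i : ℕ, (wanderingSubspace b M).map (shift k V i).toLinearMap
  have hWS : wanderingSubspace b M ≤ S := fun w hw =>
    Submodule.mem_iSup_of_mem 0 ⟨w, hw, by simp⟩
  have hSshift : S ≤ S.comap (shift k V 1).toLinearMap := iSup_le fun i => by
    rintro _ ⟨w, hw, rfl⟩
    exact Submodule.mem_iSup_of_mem (i + 1) ⟨w, hw, by simp [add_comm]⟩
  induction n with
  | zero =>
    rintro v ⟨hv, hv'⟩
    have hvM : v ∈ (constForm b).orthogonal M := fun u hu => hv' u ⟨u, hu, by simp⟩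
    rw [Submodule.disjoint_def.1 (hM.disjoint_orthogonal hb haniso) v hv hvM]
    exact S.zero_mem
  | succ n ih =>
    rintro v ⟨hv, hv'⟩
    obtain ⟨w, hw, u, hu, rfl⟩ := exists_eq_add_shift_of_mem hM hb haniso hv
    refine S.add_mem (hWS hw) (hSshift (ih ⟨hu, ?_⟩))
    rintro _ ⟨y, hy, rfl⟩
    have hyw : constForm b (shift k V (1 + n) y) w = 0 :=
      hw.2 _ ⟨shift k V n y, hM.shift_mem n.cast_nonneg hy, by simp⟩
    have hyv : constForm b (shift k V (1 + n) y) (w + shift k V 1 u) = 0 :=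
      hv' _ ⟨y, hy, by simp [add_comm]⟩
    rw [map_add, hyw, zero_add, ← shift_shift, constForm_shift_shift] at hyv
    exact hyv

theorem iSup_map_shift_wanderingSubspace [FiniteDimensional k V] (hM : IsLaurentLattice M)
    (hb : b.IsSymm) (haniso : ∀ x, b x x = 0 → x = 0) :
    ⨆ n : ℕ, (wanderingSubspace b M).map (shift k V n).toLinearMap = M := by
  refine le_antisymm (iSup_le fun n => ?_) fun v hv => ?_
  · exact Submodule.map_le_iff_le_comap.2 fun w hw => hM.shift_mem n.cast_nonneg hw.1
  · obtain ⟨n, hn⟩ := exists_mem_orthogonal_map_shift hM hb v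
    exact inf_orthogonal_map_shift_le_iSup hM hb haniso n ⟨hv, hn⟩

theorem bijective_evalOne_domRestrict_wanderingSubspace [FiniteDimensional k V]
    (hM : IsLaurentLattice M) (hb : b.IsSymm) (haniso : ∀ x, b x x = 0 → x = 0) :
    Function.Bijective ((evalOne k V).domRestrict (wanderingSubspace b M)) := by
  constructor
  · refine (injective_iff_map_eq_zero _).2 fun w hw => Subtype.ext ?_
    refine eq_zero_of_laurentForm_self_eq_zero haniso ?_
    rw [laurentForm_of_mem_wanderingSubspace hM hb w.2 w.2]
    have hev : evalOne k V w = 0 := hw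
    simp [hev]
  · intro x
    have hle : M ≤ ((wanderingSubspace b M).map (evalOne k V)).comap (evalOne k V) := by
      conv_lhs => rw [← iSup_map_shift_wanderingSubspace hM hb haniso]
      exact iSup_le fun n => Submodule.map_le_iff_le_comap.2 fun w hw => ⟨w, hw, by simp⟩
    obtain ⟨n, hn⟩ := hM.exists_stdLattice_le
    obtain ⟨w, hw, hwx⟩ := hle (hn (single_mem_stdLattice le_rfl x))
    exact ⟨⟨w, hw⟩, by simpa using hwx⟩

theorem exists_section_evalOne_wanderingSubspace [FiniteDimensional k V]
    (hM : IsLaurentLattice M) (hb : b.IsSymm) (haniso : ∀ x, b x x = 0 → x = 0) :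
    ∃ s : V →ₗ[k] (ℤ →₀ V), LinearMap.range s = wanderingSubspace b M ∧
      ∀ x, evalOne k V (s x) = x := by
  let e := LinearEquiv.ofBijective _ (bijective_evalOne_domRestrict_wanderingSubspace hM hb haniso)
  exact ⟨(wanderingSubspace b M).subtype ∘ₗ e.symm.toLinearMap, by simp [LinearMap.range_comp],
    e.apply_symm_apply⟩

end OrthogonalDecomposition

section LaurentExtension

variable {k V} (s : V →ₗ[k] (ℤ →₀ V))

/-- The `k[t,t⁻¹]`-linear endomorphism of `V[t,t⁻¹]` that extends a `k`-linear map on `V`. -/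
noncomputable def laurentExtension : (ℤ →₀ V) →ₗ[k] (ℤ →₀ V) :=
  lsum k fun i => (shift k V i).toLinearMap ∘ₗ s

@[simp]
theorem laurentExtension_single (i : ℤ) (x : V) :
    laurentExtension s (single i x) = shift k V i (s x) := by
  simp [laurentExtension]

theorem laurentExtension_shift (n : ℤ) (v : ℤ →₀ V) :
    laurentExtension s (shift k V n v) = shift k V n (laurentExtension s v) := by
  induction v using Finsupp.induction_linear <;> simp_all [add_comm]

theorem map_laurentExtension_stdLattice_zero :
    (stdLattice k V 0).map (laurentExtension s) =
      ⨆ n : ℕ, (LinearMap.range s).map (shift k V n).toLinearMap := by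
  refine le_antisymm (Submodule.map_le_iff_le_comap.2 ?_) (iSup_le fun n => ?_)
  · refine supported_le_of_single_mem fun i hi x => ?_
    lift i to ℕ using hi
    exact Submodule.mem_iSup_of_mem i ⟨s x, ⟨x, rfl⟩, by simp⟩
  · rintro _ ⟨_, ⟨x, rfl⟩, rfl⟩
    exact ⟨single n x, single_mem_stdLattice n.cast_nonneg x, by simp⟩

variable {s} {b : LinearMap.BilinForm k V}

theorem evalOne_laurentExtension (hs : ∀ x, evalOne k V (s x) = x) (v : ℤ →₀ V) :
    evalOne k V (laurentExtension s v) = evalOne k V v := by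
  induction v using Finsupp.induction_linear <;> simp_all

theorem laurentForm_laurentExtension (hs : ∀ x y, laurentForm b (s x) (s y) = single 0 (b x y))
    (v w : ℤ →₀ V) :
    laurentForm b (laurentExtension s v) (laurentExtension s w) = laurentForm b v w := by
  suffices h : (laurentForm b).compl₁₂ (laurentExtension s) (laurentExtension s) =
    laurentForm b from LinearMap.congr_fun₂ h v w
  ext
  simp [hs, neg_add_eq_sub]

theorem surjective_laurentExtension {n : ℤ}
    (h : stdLattice k V n ≤ LinearMap.range (laurentExtension s)) :
    Function.Surjective (laurentExtension s) := by
  rw [← LinearMap.range_eq_top, ← top_le_iff, ← supported_univ]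
  refine supported_le_of_single_mem fun i _ x => ?_
  obtain ⟨u, hu⟩ := h (single_mem_stdLattice le_rfl x)
  exact ⟨shift k V (i - n) u, by simp [laurentExtension_shift, hu]⟩

end LaurentExtension

section Paraunitary

variable {k V} {b : LinearMap.BilinForm k V} {φ ψ : (ℤ →₀ V) ≃ₗ[k] (ℤ →₀ V)}

theorem injective_of_laurentForm_map (haniso : ∀ x, b x x = 0 → x = 0)
    {f : (ℤ →₀ V) →ₗ[k] (ℤ →₀ V)}
    (hf : ∀ v w, laurentForm b (f v) (f w) = laurentForm b v w) : Function.Injective f :=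
  (injective_iff_map_eq_zero f).2 fun v hv =>
    eq_zero_of_laurentForm_self_eq_zero haniso <| by rw [← hf, hv, map_zero]

theorem map_shift_of_map_shift_one (h : ∀ v, φ (shift k V 1 v) = shift k V 1 (φ v)) (n : ℤ)
    (v : ℤ →₀ V) : φ (shift k V n v) = shift k V n (φ v) := by
  induction n with
  | zero => simp
  | succ n ih =>
    rw [add_comm, ← shift_shift, h, ih, shift_shift]
  | pred n ih =>
    apply (shift k V 1).injective
    rw [← h]
    simpa using ih

theorem isPPU_iff : IsPPU k V b φ ↔
    (∀ n v, φ (shift k V n v) = shift k V n (φ v)) ∧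
    (∀ v w, laurentForm b (φ v) (φ w) = laurentForm b v w) ∧
    ∀ v, evalOne k V (φ v) = evalOne k V v := by
  constructor
  · rintro ⟨⟨hshift, hform⟩, heps⟩
    have hshift' := map_shift_of_map_shift_one hshift
    refine ⟨hshift', fun v w => ?_, fun v => ?_⟩
    · ext n
      simpa only [laurentForm_apply] using hform n v w
    · induction v using Finsupp.induction_linear with
      | zero => simp
      | add v w hv hw => simp [hv, hw]
      | single i x =>
        have hx : evalOne k V (φ (single 0 x)) = x := LinearMap.congr_fun heps x
        rw [← zero_add i, ← shift_single (k := k), hshift', evalOne_shift, hx]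
        simp
  · rintro ⟨hshift, hform, heval⟩
    refine ⟨⟨hshift 1, fun n v w => ?_⟩, LinearMap.ext fun x => ?_⟩
    · rw [← laurentForm_apply, ← laurentForm_apply, hform]
    · exact (heval (single 0 x)).trans (evalOne_single 0 x)

theorem IsPPU.mul (hφ : IsPPU k V b φ) (hψ : IsPPU k V b ψ) : IsPPU k V b (φ * ψ) := by
  rw [isPPU_iff] at *
  simp [hφ, hψ]

theorem IsPPU.inv (hφ : IsPPU k V b φ) : IsPPU k V b φ⁻¹ := by
  have hcancel : ∀ v, φ (φ⁻¹ v) = v := φ.apply_symm_apply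
  obtain ⟨hshift, hform, heval⟩ := isPPU_iff.1 hφ
  refine isPPU_iff.2 ⟨fun n v => φ.injective ?_, fun v w => ?_, fun v => ?_⟩
  · rw [hshift, hcancel, hcancel]
  · rw [← hform, hcancel, hcancel]
  · rw [← heval, hcancel]

/-- The `k[t]`-lattice `φ⁻¹(V[t])`, which turns the order on `PPU(b)` into inclusion. -/
noncomputable def preimageLattice (φ : (ℤ →₀ V) ≃ₗ[k] (ℤ →₀ V)) : Submodule k (ℤ →₀ V) :=
  (stdLattice k V 0).comap φ.toLinearMap

theorem IsPPU.stdLattice_zero_le_comap_iff (hφ : IsPPU k V b φ) {n : ℤ} :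
    stdLattice k V 0 ≤ (stdLattice k V n).comap φ.toLinearMap ↔
      ∀ x, φ (single 0 x) ∈ stdLattice k V n := by
  refine ⟨fun h x => h (single_mem_stdLattice le_rfl x), fun h => ?_⟩
  refine supported_le_of_single_mem fun i (hi : 0 ≤ i) x => ?_
  rw [← zero_add i, ← shift_single (k := k)]
  change φ (shift k V i (single 0 x)) ∈ stdLattice k V n
  rw [(isPPU_iff.1 hφ).1, shift_mem_stdLattice_iff]
  exact stdLattice_antitone (by lia) (h x)

theorem IsPPU.exists_stdLattice_zero_le_comap [FiniteDimensional k V] (hφ : IsPPU k V b φ) :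
    ∃ n, stdLattice k V 0 ≤ (stdLattice k V n).comap φ.toLinearMap := by
  obtain ⟨n, hn⟩ := exists_le_stdLattice_of_fg
    (Submodule.fg_range (φ.toLinearMap ∘ₗ lsingle 0))
  exact ⟨n, hφ.stdLattice_zero_le_comap_iff.2 fun x => hn ⟨x, rfl⟩⟩

theorem IsPPU.isLaurentLattice_preimageLattice [FiniteDimensional k V] (hφ : IsPPU k V b φ) :
    IsLaurentLattice (preimageLattice φ) where
  shift_one_mem v hv := by
    change φ (shift k V 1 v) ∈ stdLattice k V 0
    rw [(isPPU_iff.1 hφ).1, shift_mem_stdLattice_iff]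
    exact stdLattice_antitone (by lia) hv
  exists_stdLattice_le := by
    obtain ⟨n, hn⟩ := hφ.exists_stdLattice_zero_le_comap
    refine ⟨-n, fun v hv => ?_⟩
    have hshift : φ (shift k V n v) ∈ stdLattice k V n :=
      hn (shift_mem_stdLattice_iff.2 (by simpa using hv))
    rwa [(isPPU_iff.1 hφ).1, shift_mem_stdLattice_iff, sub_self] at hshift
  exists_le_stdLattice := by
    obtain ⟨n, hn⟩ := hφ.inv.exists_stdLattice_zero_le_comap
    refine ⟨n, fun v hv => ?_⟩
    have hinv : φ⁻¹ (φ v) ∈ stdLattice k V n := hn hv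
    rwa [show φ⁻¹ (φ v) = v from φ.symm_apply_apply v] at hinv

theorem ppuPos_mul_inv_iff (hφ : IsPPU k V b φ) (hψ : IsPPU k V b ψ) :
    PPUpos k V b (ψ * φ⁻¹) ↔ preimageLattice φ ≤ preimageLattice ψ := by
  have hψφ := hψ.mul hφ.inv
  calc PPUpos k V b (ψ * φ⁻¹)
      ↔ ∀ x, (ψ * φ⁻¹) (single 0 x) ∈ stdLattice k V 0 := by
        simp only [PPUpos, hψφ, true_and, mem_stdLattice]
    _ ↔ stdLattice k V 0 ≤ (stdLattice k V 0).comap (ψ * φ⁻¹).toLinearMap :=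
        hψφ.stdLattice_zero_le_comap_iff.symm
    _ ↔ preimageLattice φ ≤ preimageLattice ψ := by
        refine ⟨fun h v hv => ?_, fun h v hv => h (x := φ⁻¹ v) ?_⟩
        · have hmem : ψ (φ⁻¹ (φ v)) ∈ stdLattice k V 0 := h hv
          rwa [show φ⁻¹ (φ v) = v from φ.symm_apply_apply v] at hmem
        · change φ (φ⁻¹ v) ∈ stdLattice k V 0
          rwa [show φ (φ⁻¹ v) = v from φ.apply_symm_apply v]

theorem exists_isPPU_preimageLattice_eq [FiniteDimensional k V] {M : Submodule k (ℤ →₀ V)}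
    (hM : IsLaurentLattice M) (hb : b.IsSymm) (haniso : ∀ x, b x x = 0 → x = 0) :
    ∃ σ, IsPPU k V b σ ∧ preimageLattice σ = M := by
  obtain ⟨s, hrange, hsection⟩ := exists_section_evalOne_wanderingSubspace hM hb haniso
  have hs_mem : ∀ x, s x ∈ wanderingSubspace b M := fun x => hrange.le ⟨x, rfl⟩
  have hform : ∀ v w, laurentForm b (laurentExtension s v) (laurentExtension s w) =
      laurentForm b v w := laurentForm_laurentExtension fun x y => by
    rw [laurentForm_of_mem_wanderingSubspace hM hb (hs_mem x) (hs_mem y), hsection, hsection]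
  have hmap : (stdLattice k V 0).map (laurentExtension s) = M := by
    rw [map_laurentExtension_stdLattice_zero, hrange,
      iSup_map_shift_wanderingSubspace hM hb haniso]
  obtain ⟨n, hn⟩ := hM.exists_stdLattice_le
  have hsurj : Function.Surjective (laurentExtension s) :=
    surjective_laurentExtension (hn.trans (hmap.ge.trans LinearMap.map_le_range))
  let θ := LinearEquiv.ofBijective (laurentExtension s)
    ⟨injective_of_laurentForm_map haniso hform, hsurj⟩
  have hθ : IsPPU k V b θ :=
    isPPU_iff.2 ⟨laurentExtension_shift s, hform, evalOne_laurentExtension hsection⟩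
  refine ⟨θ⁻¹, hθ.inv, ?_⟩
  rw [← hmap]
  exact (Submodule.map_equiv_eq_comap_symm θ _).symm

end Paraunitary

/-- The right-invariant order `φ ≤ ψ :⟺ ψφ⁻¹ ∈ PPU(b)⁺` on `PPU(b)`
is a lattice order: any two elements of `PPU(b)` have a least upper bound and a
greatest lower bound within `PPU(b)`. -/
theorem stmt6 [FiniteDimensional k V] (b : LinearMap.BilinForm k V)
    (hsymm : ∀ v w : V, b v w = b w v)
    (haniso : ∀ v : V, b v v = 0 → v = 0) :
    ∀ φ ψ : (ℤ →₀ V) ≃ₗ[k] (ℤ →₀ V), IsPPU k V b φ → IsPPU k V b ψ →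
      (∃ σ, IsPPU k V b σ ∧ PPUpos k V b (σ * φ⁻¹) ∧ PPUpos k V b (σ * ψ⁻¹) ∧
        ∀ χ, IsPPU k V b χ → PPUpos k V b (χ * φ⁻¹) → PPUpos k V b (χ * ψ⁻¹) →
          PPUpos k V b (χ * σ⁻¹)) ∧
      (∃ τ, IsPPU k V b τ ∧ PPUpos k V b (φ * τ⁻¹) ∧ PPUpos k V b (ψ * τ⁻¹) ∧
        ∀ χ, IsPPU k V b χ → PPUpos k V b (φ * χ⁻¹) → PPUpos k V b (ψ * χ⁻¹) →
          PPUpos k V b (τ * χ⁻¹)) := by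
  intro φ ψ hφ hψ
  have hb : b.IsSymm := ⟨hsymm⟩
  have hLφ := hφ.isLaurentLattice_preimageLattice
  have hLψ := hψ.isLaurentLattice_preimageLattice
  obtain ⟨σ, hσ, hσL⟩ := exists_isPPU_preimageLattice_eq (hLφ.sup hLψ) hb haniso
  obtain ⟨τ, hτ, hτL⟩ := exists_isPPU_preimageLattice_eq (hLφ.inf hLψ) hb haniso
  refine ⟨⟨σ, hσ, ?_, ?_, fun χ hχ hφχ hψχ => ?_⟩, ⟨τ, hτ, ?_, ?_, fun χ hχ hχφ hχψ => ?_⟩⟩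
  · exact (ppuPos_mul_inv_iff hφ hσ).2 (hσL ▸ le_sup_left)
  · exact (ppuPos_mul_inv_iff hψ hσ).2 (hσL ▸ le_sup_right)
  · rw [ppuPos_mul_inv_iff hφ hχ] at hφχ
    rw [ppuPos_mul_inv_iff hψ hχ] at hψχ
    exact (ppuPos_mul_inv_iff hσ hχ).2 (hσL ▸ sup_le hφχ hψχ)
  · exact (ppuPos_mul_inv_iff hτ hφ).2 (hτL ▸ inf_le_left)
  · exact (ppuPos_mul_inv_iff hτ hψ).2 (hτL ▸ inf_le_right)
  · rw [ppuPos_mul_inv_iff hχ hφ] at hχφ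
    rw [ppuPos_mul_inv_iff hχ hψ] at hχψ
    exact (ppuPos_mul_inv_iff hχ hτ).2 (hτL ▸ le_inf hχφ hχψ)
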